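/- arXiv:0810.4969 — 4 statements merged into one kernel-verified Lean document; each statement's English description precedes it below -/
import Mathlib

section
/- Let M ≥ 1 and let H : [0,1] → [0,1] be an M-quasisymmetric increasing homeomorphism with H(0) = 0 and H(1) = 1. For n ≥ 1 set χ_n = max{(M/(M+1))^n − 1/2^n, 1/2^n − (1/(M+1))^n}. Then for every integer n ≥ 2, max_{0 ≤ i ≤ 2^n} |H(i/2^n) − i/2^n| ≤ max_{0 ≤ i ≤ 2^{n−1}} |H(i/2^{n−1}) − i/2^{n−1}| + χ_n. -/
/-- `H` is an `M`-quasisymmetric map on `[0,1]`: for all `x` and `t > 0` with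
`x - t, x + t ∈ [0,1]`, `M⁻¹ ≤ (H(x+t) - H(x))/(H(x) - H(x-t)) ≤ M`. -/
def IsQSOn (M : ℝ) (H : ℝ → ℝ) : Prop :=
  ∀ x t : ℝ, 0 < t → x - t ∈ Set.Icc (0:ℝ) 1 → x + t ∈ Set.Icc (0:ℝ) 1 →
    M⁻¹ ≤ (H (x + t) - H x) / (H x - H (x - t)) ∧
      (H (x + t) - H x) / (H x - H (x - t)) ≤ M

theorem qs_bounds (M : ℝ) (hM : 1 ≤ M) (H : ℝ → ℝ)
    (hmono : StrictMonoOn H (Set.Icc (0:ℝ) 1)) (hH0 : H 0 = 0) (hH1 : H 1 = 1)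
    (hqs : IsQSOn M H) (n : ℕ) : ∀ k : ℕ, k < 2 ^ n →
      (1 / (M + 1)) ^ n ≤ H (((k:ℝ) + 1) / 2 ^ n) - H ((k:ℝ) / 2 ^ n) ∧
      H (((k:ℝ) + 1) / 2 ^ n) - H ((k:ℝ) / 2 ^ n) ≤ (M / (M + 1)) ^ n := by
  induction n with
  | zero =>
    intro k hk
    have : k = 0 := by simpa using hk
    subst this
    simp [hH0, hH1]
  | succ n ih =>
    intro k hk
    obtain ⟨j, hj⟩ : ∃ j, k = 2 * j ∨ k = 2 * j + 1 := ⟨k / 2, by omega⟩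
    have hj' : j < 2 ^ n := by rw [pow_succ] at hk; omega
    obtain ⟨h1, h2⟩ := ih j hj'
    have hp : (0:ℝ) < 2 ^ n := by positivity
    have hjr : (j:ℝ) + 1 ≤ 2 ^ n := by exact_mod_cast hj'
    have hj0 : (0:ℝ) ≤ j := Nat.cast_nonneg j
    set x : ℝ := (2 * (j:ℝ) + 1) / 2 ^ (n + 1) with hx
    set t : ℝ := 1 / 2 ^ (n + 1) with ht
    have e1 : x - t = (j:ℝ) / 2 ^ n := by rw [hx, ht, pow_succ]; field_simp; ring
    have e2 : x + t = ((j:ℝ) + 1) / 2 ^ n := by rw [hx, ht, pow_succ]; field_simp; ring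
    have t0 : 0 < t := by positivity
    have a0 : 0 ≤ x - t := by rw [e1]; positivity
    have b1 : x + t ≤ 1 := by rw [e2, div_le_one hp]; exact hjr
    have ma : x - t ∈ Set.Icc (0:ℝ) 1 := ⟨a0, by linarith⟩
    have mb : x + t ∈ Set.Icc (0:ℝ) 1 := ⟨by linarith, b1⟩
    have mx : x ∈ Set.Icc (0:ℝ) 1 := ⟨by linarith, by linarith⟩
    obtain ⟨q1, q2⟩ := hqs x t t0 ma mb
    have L0 : 0 < H x - H (x - t) := sub_pos.2 (hmono ma mx (by linarith))
    have M0 : 0 < M := by linarith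
    rw [le_div_iff₀ L0, inv_mul_le_iff₀ M0] at q1
    rw [div_le_iff₀ L0] at q2
    rw [← e1, ← e2] at h1 h2
    have c1 : (1 / (M + 1)) ^ (n + 1) * (M + 1) = (1 / (M + 1)) ^ n := by
      rw [pow_succ]; field_simp
    have c2 : (M / (M + 1)) ^ (n + 1) * (M + 1) = (M / (M + 1)) ^ n * M := by
      rw [pow_succ]; field_simp
    have key : ∀ D : ℝ, (H (x + t) - H (x - t)) ≤ D * (M + 1) →
        D * (M + 1) ≤ M * (H (x + t) - H (x - t)) →
        (1 / (M + 1)) ^ (n + 1) ≤ D ∧ D ≤ (M / (M + 1)) ^ (n + 1) := by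
      intro D d1 d2
      have hM1 : 0 < M + 1 := by linarith
      constructor
      · refine le_of_mul_le_mul_right ?_ hM1
        rw [c1]; linarith
      · refine le_of_mul_le_mul_right ?_ hM1
        rw [c2]; nlinarith
    rcases hj with hj | hj
    · have f1 : ((k:ℝ) + 1) / 2 ^ (n + 1) = x := by rw [hj, hx]; push_cast; ring
      have f2 : (k:ℝ) / 2 ^ (n + 1) = x - t := by
        rw [hj, hx, ht]; push_cast; ring
      rw [f1, f2]
      apply key <;> nlinarith
    · have f1 : ((k:ℝ) + 1) / 2 ^ (n + 1) = x + t := by rw [hj, hx, ht]; push_cast; ring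
      have f2 : (k:ℝ) / 2 ^ (n + 1) = x := by
        rw [hj, hx]; push_cast; ring
      rw [f1, f2]
      apply key <;> nlinarith

theorem stmt3 (M : ℝ) (hM : 1 ≤ M) (H : ℝ → ℝ)
    (hmono : StrictMonoOn H (Set.Icc (0:ℝ) 1))
    (hcont : ContinuousOn H (Set.Icc (0:ℝ) 1))
    (hsurj : Set.SurjOn H (Set.Icc (0:ℝ) 1) (Set.Icc (0:ℝ) 1))
    (hH0 : H 0 = 0) (hH1 : H 1 = 1)
    (hqs : IsQSOn M H)
    (χ : ℕ → ℝ)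
    (hχ : ∀ n : ℕ, 1 ≤ n →
      χ n = max ((M / (M + 1)) ^ n - 1 / 2 ^ n) (1 / 2 ^ n - (1 / (M + 1)) ^ n)) :
    ∀ n : ℕ, 2 ≤ n →
      (Finset.range (2 ^ n + 1)).sup'
          (Finset.nonempty_range_iff.mpr (Nat.succ_ne_zero _))
          (fun i => |H ((i : ℝ) / 2 ^ n) - (i : ℝ) / 2 ^ n|) ≤
        (Finset.range (2 ^ (n - 1) + 1)).sup'
            (Finset.nonempty_range_iff.mpr (Nat.succ_ne_zero _))
            (fun i => |H ((i : ℝ) / 2 ^ (n - 1)) - (i : ℝ) / 2 ^ (n - 1)|) + χ n := by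
  intro n hn
  obtain ⟨m, rfl⟩ : ∃ m, n = m + 1 := ⟨n - 1, by omega⟩
  simp only [Nat.add_sub_cancel]
  rw [hχ (m + 1) (by omega)]
  set S := (Finset.range (2 ^ m + 1)).sup'
    (Finset.nonempty_range_iff.mpr (Nat.succ_ne_zero _))
    (fun i : ℕ => |H ((i : ℝ) / 2 ^ m) - (i : ℝ) / 2 ^ m|) with hS
  have hle : ∀ j : ℕ, j ≤ 2 ^ m → |H ((j : ℝ) / 2 ^ m) - (j : ℝ) / 2 ^ m| ≤ S := by
    intro j hj
    exact Finset.le_sup' (fun i : ℕ => |H ((i : ℝ) / 2 ^ m) - (i : ℝ) / 2 ^ m|)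
      (Finset.mem_range.2 (by omega))
  have hpos : (0:ℝ) ≤ (M / (M + 1)) ^ (m + 1) - 1 / 2 ^ (m + 1) := by
    have h : (1:ℝ) / 2 ≤ M / (M + 1) := by
      rw [div_le_div_iff₀ (by norm_num) (by linarith)]; linarith
    have h2 := pow_le_pow_left₀ (by norm_num) h (m + 1)
    rw [one_div_pow] at h2
    linarith
  refine Finset.sup'_le _ _ ?_
  intro i hi
  have hi' : i ≤ 2 ^ (m + 1) := by have := Finset.mem_range.1 hi; omega
  have m1 := le_max_left ((M / (M + 1)) ^ (m + 1) - 1 / 2 ^ (m + 1))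
    (1 / 2 ^ (m + 1) - (1 / (M + 1)) ^ (m + 1))
  have m2 := le_max_right ((M / (M + 1)) ^ (m + 1) - 1 / 2 ^ (m + 1))
    (1 / 2 ^ (m + 1) - (1 / (M + 1)) ^ (m + 1))
  obtain ⟨j, hj⟩ : ∃ j, i = 2 * j ∨ i = 2 * j + 1 := ⟨i / 2, by omega⟩
  have hj' : j ≤ 2 ^ m := by rw [pow_succ] at hi'; omega
  have hb := hle j hj'
  have e : ((2 * j : ℕ) : ℝ) / 2 ^ (m + 1) = (j:ℝ) / 2 ^ m := by
    rw [pow_succ]; push_cast; field_simp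
  rcases hj with rfl | rfl
  · simp only [e]
    linarith
  · obtain ⟨b1, b2⟩ := qs_bounds M hM H hmono hH0 hH1 hqs (m + 1) (2 * j)
      (by omega)
    have e3 : (((2 * j + 1 : ℕ) : ℝ)) / 2 ^ (m + 1) = (j:ℝ) / 2 ^ m + 1 / 2 ^ (m + 1) := by
      rw [← e]; push_cast; ring
    have e4 : (((2 * j : ℕ) : ℝ) + 1) / 2 ^ (m + 1) = (j:ℝ) / 2 ^ m + 1 / 2 ^ (m + 1) := by
      rw [← e]; push_cast; ring
    rw [e4, e] at b1 b2
    simp only [e3]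
    rw [abs_le] at hb ⊢
    constructor <;> linarith
end

section
/- For every ε > 0 there exists δ > 0 such that for every M with 1 ≤ M ≤ 1 + δ and every M-quasisymmetric increasing homeomorphism H : [0,1] → [0,1] with H(0) = 0 and H(1) = 1, one has |H(x) − x| ≤ ε for all x ∈ [0,1]. -/
theorem stmt4 :
    ∀ ε : ℝ, 0 < ε → ∃ δ : ℝ, 0 < δ ∧
      ∀ M : ℝ, 1 ≤ M → M ≤ 1 + δ →
        ∀ H : ℝ → ℝ,
          StrictMonoOn H (Set.Icc (0:ℝ) 1) →
          ContinuousOn H (Set.Icc (0:ℝ) 1) →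
          Set.SurjOn H (Set.Icc (0:ℝ) 1) (Set.Icc (0:ℝ) 1) →
          H 0 = 0 → H 1 = 1 →
          IsQSOn M H →
          ∀ x ∈ Set.Icc (0:ℝ) 1, |H x - x| ≤ ε := by
  intro ε hε
  refine ⟨ε, hε, ?_⟩
  intro M hM1 hM H hmono hcont _ h0 h1 hqs
  have hc : ContinuousOn (fun x => |H x - x|) (Set.Icc (0:ℝ) 1) :=
    (hcont.sub continuousOn_id).abs
  obtain ⟨c, hcI, hcmax⟩ := isCompact_Icc.exists_isMaxOn
    (Set.nonempty_Icc.2 (zero_le_one (α := ℝ))) hc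
  have hmax : ∀ y ∈ Set.Icc (0:ℝ) 1, |H y - y| ≤ |H c - c| := fun y hy => hcmax hy
  -- approximate midpoint identity
  have key : ∀ x t : ℝ, 0 < t → x - t ∈ Set.Icc (0:ℝ) 1 → x + t ∈ Set.Icc (0:ℝ) 1 →
      |H (x + t) + H (x - t) - 2 * H x| ≤ ε := by
    intro x t ht hl hr
    obtain ⟨hq1, hq2⟩ := hqs x t ht hl hr
    have hx : x ∈ Set.Icc (0:ℝ) 1 := ⟨by linarith [hl.1], by linarith [hr.2]⟩
    have ha : 0 < H x - H (x - t) := sub_pos.2 (hmono hl hx (by linarith))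
    have hb : 0 < H (x + t) - H x := sub_pos.2 (hmono hx hr (by linarith))
    have hlo : 0 ≤ H (x - t) := by
      rw [← h0]; exact hmono.monotoneOn (by simp) hl hl.1
    have hhi : H (x + t) ≤ 1 := by
      rw [← h1]; exact hmono.monotoneOn hr (by simp) hr.2
    rw [div_le_iff₀ ha] at hq2
    rw [le_div_iff₀ ha, inv_mul_le_iff₀ (by linarith)] at hq1
    rw [abs_le]
    constructor <;> nlinarith
  have hS : |H c - c| ≤ ε := by
    rcases eq_or_lt_of_le hcI.1 with h | hpos
    · rw [← h, h0]; simpa using hε.le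
    rcases eq_or_lt_of_le hcI.2 with h | hlt
    · rw [h, h1]; simpa using hε.le
    rcases le_total c (1/2) with h | h
    · have hk := key c c hpos (by simp) ⟨by linarith, by linarith⟩
      have hm := hmax (c + c) ⟨by linarith, by linarith⟩
      rw [sub_self, h0] at hk
      rw [abs_le] at hk hm
      rcases abs_cases (H c - c) with ⟨e, _⟩ | ⟨e, _⟩ <;> rw [e] at hm ⊢ <;> linarith
    · have hk := key c (1 - c) (by linarith) ⟨by linarith, by linarith⟩ (by simp)
      have hm := hmax (c - (1 - c)) ⟨by linarith, by linarith⟩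
      rw [add_sub_cancel, h1] at hk
      rw [abs_le] at hk hm
      rcases abs_cases (H c - c) with ⟨e, _⟩ | ⟨e, _⟩ <;> rw [e] at hm ⊢ <;> linarith
  intro x hx
  exact (hmax x hx).trans hS
end

section
/- Let g : [a,b] → ℝ be differentiable and strictly monotone on the compact interval [a,b] with a < b, and suppose there is a constant B ≥ 1 such that |g'(u)| ≤ B·|g'(v)| for all u, v ∈ [a,b]. Then for every subinterval [c,d] ⊆ [a,b] with c < d, (d − c)/(b − a) ≥ (1/B)·|g(d) − g(c)|/|g(b) − g(a)|. -/
theorem stmt7 (a b : ℝ) (hab : a < b) (g g' : ℝ → ℝ)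
    (hderiv : ∀ x ∈ Set.Icc a b, HasDerivWithinAt g (g' x) (Set.Icc a b) x)
    (hmono : StrictMonoOn g (Set.Icc a b) ∨ StrictAntiOn g (Set.Icc a b))
    (B : ℝ) (hB : 1 ≤ B)
    (hdist : ∀ u ∈ Set.Icc a b, ∀ v ∈ Set.Icc a b, |g' u| ≤ B * |g' v|) :
    ∀ c d : ℝ, a ≤ c → c < d → d ≤ b →
      (d - c) / (b - a) ≥ (1 / B) * (|g d - g c| / |g b - g a|) := by
  intro c d hac hcd hdb
  have key : ∀ p q : ℝ, a ≤ p → p < q → q ≤ b →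
      ∃ u ∈ Set.Icc a b, |g q - g p| = |g' u| * (q - p) := by
    intro p q hp hpq hq
    have hsub : Set.Icc p q ⊆ Set.Icc a b := Set.Icc_subset_Icc hp hq
    obtain ⟨u, hu, hu'⟩ := exists_hasDerivAt_eq_slope g g' hpq
      (fun x hx => ((hderiv x (hsub hx)).continuousWithinAt).mono hsub)
      (fun x hx => (hderiv x (hsub (Set.Ioo_subset_Icc_self hx))).hasDerivAt
        (Icc_mem_nhds (lt_of_le_of_lt hp hx.1) (lt_of_lt_of_le hx.2 hq)))
    refine ⟨u, hsub (Set.Ioo_subset_Icc_self hu), ?_⟩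
    have hpos : 0 < q - p := sub_pos.mpr hpq
    rw [hu', abs_div, abs_of_pos hpos, div_mul_cancel₀ _ hpos.ne']
  obtain ⟨u, hu, hcdu⟩ := key c d hac hcd hdb
  obtain ⟨v, hv, habv⟩ := key a b le_rfl hab le_rfl
  have ha : a ∈ Set.Icc a b := ⟨le_rfl, hab.le⟩
  have hb : b ∈ Set.Icc a b := ⟨hab.le, le_rfl⟩
  have hne : g b - g a ≠ 0 := by
    rcases hmono with h | h
    · exact (sub_pos.mpr (h ha hb hab)).ne'
    · exact (sub_neg.mpr (h ha hb hab)).ne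
  have hpos : 0 < |g b - g a| := abs_pos.mpr hne
  have hba : 0 < b - a := sub_pos.mpr hab
  have hdc : 0 < d - c := sub_pos.mpr hcd
  have hB0 : 0 < B := by linarith
  have h1 := hdist u hu v hv
  rw [ge_iff_le, div_mul_div_comm, one_mul, div_le_div_iff₀ (by positivity) hba, hcdu, habv]
  have h2 := mul_le_mul_of_nonneg_right h1 (mul_pos hdc hba).le
  linarith
end

section
/- Let g : [a,b] → ℝ be continuously differentiable and strictly monotone on the compact interval [a,b] with a < b, with g'(x) ≠ 0 for all x, and suppose there is a constant B ≥ 1 such that |g'(u)| ≤ B·|g'(v)| for all u, v ∈ [a,b]. Let E ⊆ [a,b] be a Lebesgue measurable set with Leb(E) ≥ (1 − ε)·(b − a) for some 0 ≤ ε ≤ 1. Then Leb(g(E)) ≥ (1 − B·ε)·Leb(g([a,b])). -/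
open MeasureTheory

theorem stmt15 (a b : ℝ) (hab : a < b) (g g' : ℝ → ℝ)
    (hderiv : ∀ x ∈ Set.Icc a b, HasDerivWithinAt g (g' x) (Set.Icc a b) x)
    (hcont : ContinuousOn g' (Set.Icc a b))
    (hmono : StrictMonoOn g (Set.Icc a b) ∨ StrictAntiOn g (Set.Icc a b))
    (hne : ∀ x ∈ Set.Icc a b, g' x ≠ 0)
    (B : ℝ) (hB : 1 ≤ B)
    (hdist : ∀ u ∈ Set.Icc a b, ∀ v ∈ Set.Icc a b, |g' u| ≤ B * |g' v|)
    (E : Set ℝ) (hE : MeasurableSet E) (hEsub : E ⊆ Set.Icc a b)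
    (ε : ℝ) (hε0 : 0 ≤ ε) (hε1 : ε ≤ 1)
    (hEmeas : ENNReal.ofReal ((1 - ε) * (b - a)) ≤ volume E) :
    ENNReal.ofReal (1 - B * ε) * volume (g '' Set.Icc a b) ≤ volume (g '' E) := by
  have hI : MeasurableSet (Set.Icc a b) := measurableSet_Icc
  have hinj : Set.InjOn g (Set.Icc a b) := by
    rcases hmono with h | h
    · exact h.injOn
    · exact h.injOn
  have hint : IntegrableOn (fun x => |g' x|) (Set.Icc a b) volume :=
    hcont.abs.integrableOn_compact isCompact_Icc
  have key : ∀ S : Set ℝ, MeasurableSet S → S ⊆ Set.Icc a b →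
      volume (g '' S) = ENNReal.ofReal (∫ x in S, |g' x|) := by
    intro S hS hSs
    have h := lintegral_image_eq_lintegral_abs_deriv_mul hS
      (fun x hx => (hderiv x (hSs hx)).mono hSs) (hinj.mono hSs) (fun _ => 1)
    rw [ofReal_integral_eq_lintegral_ofReal (hint.mono_set hSs)
      (Filter.Eventually.of_forall fun x => abs_nonneg _)]
    simpa using h
  obtain ⟨u, hu, humax⟩ := isCompact_Icc.exists_isMaxOn (Set.nonempty_Icc.2 hab.le) hcont.abs
  have hfin : volume E ≠ ⊤ := measure_ne_top_of_subset hEsub (by simp)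
  have hEr : (1 - ε) * (b - a) ≤ volume.real E :=
    (ENNReal.ofReal_le_iff_le_toReal hfin).1 hEmeas
  have hvI : volume.real (Set.Icc a b) = b - a := by simp [Measure.real, hab.le]
  have hF : volume.real (Set.Icc a b \ E) = (b - a) - volume.real E := by
    rw [measureReal_sdiff hEsub hE (by simp), hvI]
  have hFfin : volume (Set.Icc a b \ E) ≠ ⊤ :=
    measure_ne_top_of_subset Set.sdiff_subset (by simp : volume (Set.Icc a b) ≠ ⊤)
  have hsplit : (∫ x in Set.Icc a b \ E, |g' x|)
      = (∫ x in Set.Icc a b, |g' x|) - ∫ x in E, |g' x| :=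
    setIntegral_sdiff hE hint hEsub
  have h1 : (∫ x in Set.Icc a b \ E, |g' x|) ≤ |g' u| * volume.real (Set.Icc a b \ E) := by
    have := setIntegral_mono_on (hint.mono_set Set.sdiff_subset)
      (integrableOn_const (C := |g' u|) hFfin) (hI.diff hE) (fun x hx => humax hx.1)
    rw [setIntegral_const, smul_eq_mul, mul_comm] at this
    exact this
  have h2 : |g' u| * (b - a) ≤ B * ∫ x in Set.Icc a b, |g' x| := by
    have := setIntegral_mono_on (integrableOn_const (C := |g' u|) (by simp))
      (hint.const_mul B) hI (fun x hx => hdist u hu x hx)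
    rw [setIntegral_const, smul_eq_mul, mul_comm, hvI, integral_const_mul] at this
    exact this
  rw [key _ hI le_rfl, key _ hE hEsub,
    ← ENNReal.ofReal_mul' (integral_nonneg fun x => abs_nonneg _)]
  apply ENNReal.ofReal_le_ofReal
  rw [hF] at h1
  have h3 : |g' u| * ((b - a) - volume.real E) ≤ |g' u| * (ε * (b - a)) :=
    mul_le_mul_of_nonneg_left (by linarith) (abs_nonneg _)
  have h4 := mul_le_mul_of_nonneg_left h2 hε0
  linarith
end
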